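/- Let X = φ ⊗ ψ̄ be the rank-one operator (Xf)(t) = ⟨f,ψ⟩φ(t) on L²(ℝ), with φ, ψ smooth and compactly supported, and let a be a positive integer, N = ℤ × aℤ. Define X̃ = Σ_{j=0}^{a-1} M_{g_j} ρ(-j/a, 0, 1), where g_j(θ,σ) = (Zφ)(θ,σ)·conj((Zψ)(θ,σ - j/a)). Then for every smooth compactly supported f, the square partial sums Σ_{|k|≤L, |l|≤L} ρ(k, la, 1) X ρ(k, la, 1)^{-1} f converge in L²(ℝ) to a^{-1} X̃ f as L → ∞. -/

import Mathlib

open Complex MeasureTheory Filter Topology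

/-- The Schrödinger representation acting pointwise:
`(ρ(x,y,z)φ)(t) = z e^{πi(xy+2yt)} φ(t+x)`. -/
noncomputable def rho (x y : ℝ) (z : ℂ) (φ : ℝ → ℂ) : ℝ → ℂ := fun t =>
  z * Complex.exp (Real.pi * Complex.I * (x * y + 2 * y * t)) * φ (t + x)

/-- The Zak transform `(Zφ)(θ,σ) = Σ_{l∈ℤ} φ(σ-l) e^{2πilθ}` (this formula on all of `ℝ²`
is the quasi-periodic extension). -/
noncomputable def zak (φ : ℝ → ℂ) (θ σ : ℝ) : ℂ :=
  ∑' l : ℤ, φ (σ - l) * Complex.exp (2 * Real.pi * Complex.I * l * θ)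

/-- The `L²` inner product `⟨f, g⟩ = ∫ f(t) conj(g(t)) dt`. -/
noncomputable def l2inner (f g : ℝ → ℂ) : ℂ := ∫ t : ℝ, f t * (starRingEnd ℂ) (g t)

/-- `M_g h = Z⁻¹(g · Zh)` evaluated pointwise via `(Z⁻¹F)(t) = ∫₀¹ F(θ,t) dθ`. -/
noncomputable def Mmul (g : ℝ → ℝ → ℂ) (h : ℝ → ℂ) : ℝ → ℂ := fun t =>
  ∫ θ in (0 : ℝ)..1, g θ t * zak h θ t

/-!
Put `F_k = f · conj ψ(· + k)`. Then `⟨f, ρ(k,la,1)ψ⟩ ρ(k,la,1)φ(t) = φ(t+k) F̂_k(la) e^{2πilat}`,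
and the sum over `l` is `φ(t+k)` times the Fourier series of the `1/a`-periodic function
`a⁻¹ Σ_m F_k(t - m/a)`. The series converges in `L²` over each period, hence after multiplication
by the compactly supported `φ(· + k)`. On the Zak side
`Zf · conj(Zψ) = Σ_k (Σ_m F_k(σ-m)) e^{2πikθ}`, while `∫₀¹ Zφ(θ,t) e^{2πikθ} dθ = φ(t+k)`; summing
over the translates by `j/a` turns the periodizations with period `1` into those with period `1/a`,
which gives the limits found above. Only finitely many `F_k` are nonzero.
-/

section

open scoped FourierTransform ComplexConjugate Pointwise

/-- The product `s ↦ f(s) conj(ψ(s + x))`. Its Fourier transform is the cross-ambiguity function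
of `f` and `ψ`, which carries all the inner products `⟨f, ρ(x,y,1)ψ⟩`. -/
noncomputable def mulConjShift (f ψ : ℝ → ℂ) (x : ℝ) : ℝ → ℂ := fun s => f s * conj (ψ (s + x))

/-- The periodization `t ↦ Σ_{m∈ℤ} F(t - mT)` of `F` with period `T`. The sign of `m` is the one
in the definition of `zak`. -/
noncomputable def periodization (T : ℝ) (F : ℝ → ℂ) (t : ℝ) : ℂ := ∑' m : ℤ, F (t - m * T)

/-- The symmetric partial sum `Σ_{|l|≤L} F̂(la) e^{2πilat}` of the Fourier series of
`a⁻¹ Σ_m F(t - m/a)`. -/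
noncomputable def poissonPartialSum (a : ℝ) (F : ℝ → ℂ) (L : ℕ) (t : ℝ) : ℂ :=
  ∑ l ∈ Finset.Icc (-(L : ℤ)) L, 𝓕 F (l * a) * 𝐞 (l * a * t)

theorem finite_support_comp_sub_int_mul {E : Type*} [Zero E] {F : ℝ → E}
    (hF : HasCompactSupport F) {T : ℝ} (hT : T ≠ 0) (t : ℝ) :
    (Function.support fun m : ℤ => F (t - m * T)).Finite := by
  have hcomp : HasCompactSupport fun x : ℝ => F (t - x * T) :=
    hF.comp_homeomorph ((Homeomorph.mulRight₀ T hT).trans (Homeomorph.subLeft t))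
  rw [hasCompactSupport_iff_eventuallyEq, coclosedCompact_eq_cocompact] at hcomp
  exact Int.tendsto_coe_cofinite.eventually hcomp

theorem summable_comp_sub_int_mul {E : Type*} [AddCommMonoid E] [TopologicalSpace E] {F : ℝ → E}
    (hF : HasCompactSupport F) {T : ℝ} (hT : T ≠ 0) (t : ℝ) :
    Summable fun m : ℤ => F (t - m * T) :=
  summable_of_hasFiniteSupport (finite_support_comp_sub_int_mul hF hT t)

theorem hasCompactSupport_mulConjShift {f : ℝ → ℂ} (hf : HasCompactSupport f) (ψ : ℝ → ℂ) (x : ℝ) :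
    HasCompactSupport (mulConjShift f ψ x) :=
  hf.mul_right

theorem continuous_mulConjShift {f ψ : ℝ → ℂ} (hf : Continuous f) (hψ : Continuous ψ) (x : ℝ) :
    Continuous (mulConjShift f ψ x) := by
  unfold mulConjShift
  fun_prop

theorem finite_support_mulConjShift {f ψ : ℝ → ℂ} (hf : HasCompactSupport f)
    (hψ : HasCompactSupport ψ) : (Function.support fun k : ℤ => mulConjShift f ψ k).Finite := by
  have hK : IsCompact (tsupport ψ - tsupport f) := by
    rw [sub_eq_add_neg]
    exact hψ.isCompact.add hf.isCompact.neg
  refine (Int.tendsto_coe_cofinite hK.compl_mem_cocompact).subset fun k hk hkK => ?_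
  obtain ⟨s, hs⟩ := Function.ne_iff.1 hk
  have hψs : ψ (s + k) ≠ 0 := fun h => hs (by simp [mulConjShift, h])
  have hfs : f s ≠ 0 := fun h => hs (by simp [mulConjShift, h])
  exact hkK ⟨s + k, subset_tsupport ψ hψs, s, subset_tsupport f hfs, by simp⟩

theorem hasCompactSupport_comp_div {E : Type*} [Zero E] {F : ℝ → E} (hF : HasCompactSupport F)
    {a : ℝ} (ha : a ≠ 0) : HasCompactSupport fun u => F (u / a) :=
  hF.comp_homeomorph (Homeomorph.mulRight₀ a⁻¹ (inv_ne_zero ha))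

theorem fourier_comp_div {E : Type*} [NormedAddCommGroup E] [NormedSpace ℂ E] {a : ℝ} (ha : a ≠ 0)
    (F : ℝ → E) (ξ : ℝ) : 𝓕 (fun u => F (u / a)) ξ = |a| • 𝓕 F (ξ * a) := by
  rw [Real.fourier_real_eq_integral_exp_smul, Real.fourier_real_eq_integral_exp_smul,
    ← Measure.integral_comp_div]
  refine integral_congr_ae (Eventually.of_forall fun u => ?_)
  have : -2 * Real.pi * u * ξ = -2 * Real.pi * (u / a) * (ξ * a) := by field_simp
  simp only [this]

theorem poissonPartialSum_comp_div {a : ℝ} (ha : 0 < a) (F : ℝ → ℂ) (L : ℕ) (t : ℝ) :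
    poissonPartialSum 1 (fun u => F (u / a)) L (a * t) = a * poissonPartialSum a F L t := by
  simp only [poissonPartialSum, fourier_comp_div ha.ne', abs_of_pos ha, Complex.real_smul, mul_one,
    Finset.mul_sum, mul_assoc]

theorem periodization_comp_div {a : ℝ} (ha : a ≠ 0) (F : ℝ → ℂ) (t : ℝ) :
    periodization 1 (fun u => F (u / a)) (a * t) = periodization a⁻¹ F t := by
  refine tsum_congr fun m => congrArg F ?_
  field_simp

theorem continuous_poissonPartialSum (a : ℝ) (F : ℝ → ℂ) (L : ℕ) :
    Continuous (poissonPartialSum a F L) := by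
  have := Real.continuous_fourierChar
  unfold poissonPartialSum
  fun_prop

theorem sum_periodization_sub {F : ℝ → ℂ} (hF : HasCompactSupport F) {a : ℕ} (ha : a ≠ 0)
    {T : ℝ} (hT : T ≠ 0) (t : ℝ) :
    ∑ j ∈ Finset.range a, periodization (a * T) F (t - j * T) = periodization T F t := by
  have : NeZero a := ⟨ha⟩
  let e : Fin a × ℤ ≃ ℤ := (Equiv.prodComm _ _).trans (Int.divModEquiv a).symm
  have hsum : Summable fun p : Fin a × ℤ => F (t - e p * T) :=
    e.summable_iff.2 (summable_comp_sub_int_mul hF hT t)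
  unfold periodization
  rw [← e.tsum_eq, hsum.tsum_prod, tsum_fintype, Finset.sum_range]
  refine Finset.sum_congr rfl fun j _ => tsum_congr fun n => congrArg F ?_
  simp only [Equiv.trans_apply, Equiv.prodComm_apply, Prod.swap_prod_mk,
    Int.divModEquiv_symm_apply, Int.cast_add, Int.cast_mul, Int.cast_natCast, e]
  ring

theorem exists_continuousMap_eq_periodization {F : ℝ → ℂ} (hFc : Continuous F)
    (hF : HasCompactSupport F) : ∃ H : C(UnitAddCircle, ℂ),
      (∀ t : ℝ, H t = periodization 1 F t) ∧ ∀ l : ℤ, fourierCoeff H l = 𝓕 F l := by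
  let G : C(ℝ, ℂ) := ⟨F, hFc⟩
  have hdecay : F =O[cocompact ℝ] fun x : ℝ => |x| ^ (-2 : ℝ) := by
    rw [hasCompactSupport_iff_eventuallyEq, coclosedCompact_eq_cocompact] at hF
    exact hF.trans_isBigO (Asymptotics.isBigO_zero _ _)
  have hsum : ∀ K : TopologicalSpace.Compacts ℝ,
      Summable fun n : ℤ => ‖(G.comp (ContinuousMap.addRight n)).restrict K‖ := fun K =>
    summable_of_isBigO (Real.summable_abs_int_rpow one_lt_two)
      ((isBigO_norm_restrict_cocompact G two_pos hdecay K).comp_tendsto Int.tendsto_coe_cofinite)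
  refine ⟨⟨(G.periodic_tsum_comp_add_zsmul 1).lift,
    continuous_coinduced_dom.mpr (map_continuous _)⟩, fun t => ?_,
    Real.fourierCoeff_tsum_comp_add hsum⟩
  have hsum' := ContinuousMap.summable_of_locally_summable_norm hsum
  simp only [ContinuousMap.coe_mk, Function.Periodic.lift_coe, zsmul_one,
    ← ContinuousMap.tsum_apply hsum', periodization]
  rw [← (Equiv.neg ℤ).tsum_eq]
  refine tsum_congr fun m => ?_
  simp [G, sub_eq_add_neg]

theorem norm_sq_continuousMap_toLp {X : Type*} [TopologicalSpace X] [CompactSpace X]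
    [MeasurableSpace X] [BorelSpace X] (μ : Measure X) [IsFiniteMeasure μ] (H : C(X, ℂ)) :
    ‖ContinuousMap.toLp (E := ℂ) 2 μ ℂ H‖ ^ 2 = ∫ x, ‖H x‖ ^ 2 ∂μ := by
  rw [← Complex.ofReal_inj, ← integral_complex_ofReal, Complex.ofReal_pow, ← Complex.coe_algebraMap,
    ← inner_self_eq_norm_sq_to_K (𝕜 := ℂ), ContinuousMap.inner_toLp]
  simp [Complex.mul_conj, Complex.normSq_eq_norm_sq]

theorem tendsto_integral_norm_sq_fourier_partialSum_sub {T : ℝ} [Fact (0 < T)]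
    (H : C(AddCircle T, ℂ)) :
    Tendsto (fun L : ℕ => ∫ b, ‖(∑ l ∈ Finset.Icc (-(L : ℤ)) L,
      fourierCoeff H l * fourier l b) - H b‖ ^ 2 ∂AddCircle.haarAddCircle) atTop (𝓝 0) := by
  let partialSum (L : ℕ) : C(AddCircle T, ℂ) :=
    ∑ l ∈ Finset.Icc (-(L : ℤ)) L, fourierCoeff H l • fourier l
  let toL2 := ContinuousMap.toLp (E := ℂ) 2 (AddCircle.haarAddCircle (T := T)) ℂ
  have hsum : Tendsto (fun L => toL2 (partialSum L)) atTop (𝓝 (toL2 H)) := by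
    simp only [partialSum, map_sum, map_smul, ← fourierCoeff_toLp]
    exact (hasSum_fourier_series_L2 (toL2 H)).comp Finset.tendsto_Icc_neg
  have hnorm := (tendsto_iff_norm_sub_tendsto_zero.1 hsum).pow 2
  simp only [← map_sub, toL2, norm_sq_continuousMap_toLp] at hnorm
  simpa [partialSum] using hnorm

theorem intervalIntegral_unitAddCircle_neg_natCast {h : UnitAddCircle → ℝ} (hh : Continuous h)
    (n : ℕ) : ∫ t in (-n : ℝ)..n, h t = 2 * n * ∫ b, h b ∂AddCircle.haarAddCircle := by
  have hper : Function.Periodic (fun t : ℝ => h t) 1 := fun t => by simp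
  have hc : Continuous fun t : ℝ => h t := hh.comp (AddCircle.continuous_mk' 1)
  have hperiods := hper.intervalIntegral_add_zsmul_eq (2 * n) (-n)
    fun _ _ => hc.intervalIntegrable _ _
  have hend : (-n : ℝ) + (2 * n : ℤ) • (1 : ℝ) = n := by
    rw [zsmul_one]
    push_cast
    ring
  rw [hend, UnitAddCircle.intervalIntegral_preimage, zsmul_eq_mul] at hperiods
  rw [hperiods, AddCircle.integral_haarAddCircle, inv_one, one_smul]
  push_cast
  rfl

theorem exists_integral_norm_sq_mul_le {w : ℝ → ℂ} (hw : Continuous w)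
    (hws : HasCompactSupport w) : ∃ C : ℝ, ∀ H : C(UnitAddCircle, ℂ),
      ∫ t : ℝ, ‖w t * H t‖ ^ 2 ≤ C * ∫ b, ‖H b‖ ^ 2 ∂AddCircle.haarAddCircle := by
  obtain ⟨B, hB⟩ := hw.bounded_above_of_compact_support hws
  obtain ⟨R, hR⟩ := hws.isCompact.isBounded.subset_closedBall 0
  obtain ⟨n, hn⟩ := exists_nat_gt R
  refine ⟨B ^ 2 * (2 * n), fun H => ?_⟩
  have : Continuous fun t : ℝ => H (t : UnitAddCircle) :=
    H.continuous.comp (AddCircle.continuous_mk' 1)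
  have hvanish : ∀ t ∉ Set.Ioc (-n : ℝ) n, ‖w t * H t‖ ^ 2 = 0 := by
    intro t ht
    have : w t = 0 := by
      by_contra hne
      have hmem := hR (subset_tsupport w hne)
      rw [mem_closedBall_zero_iff, Real.norm_eq_abs, abs_le] at hmem
      exact ht ⟨by linarith, by linarith⟩
    simp [this]
  calc ∫ t : ℝ, ‖w t * H t‖ ^ 2
      = ∫ t in (-n : ℝ)..n, ‖w t * H t‖ ^ 2 := by
        rw [intervalIntegral.integral_of_le (by linarith [n.cast_nonneg (α := ℝ)]),
          setIntegral_eq_integral_of_forall_compl_eq_zero hvanish]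
    _ ≤ ∫ t in (-n : ℝ)..n, B ^ 2 * ‖H t‖ ^ 2 := by
        refine intervalIntegral.integral_mono_on (by linarith [n.cast_nonneg (α := ℝ)])
          (Continuous.intervalIntegrable (by fun_prop) _ _)
          (Continuous.intervalIntegrable (by fun_prop) _ _) fun t _ => ?_
        rw [norm_mul, mul_pow]
        gcongr
        exact hB t
    _ = B ^ 2 * (2 * n) * ∫ b, ‖H b‖ ^ 2 ∂AddCircle.haarAddCircle := by
        rw [intervalIntegral.integral_const_mul,
          intervalIntegral_unitAddCircle_neg_natCast (h := fun b => ‖H b‖ ^ 2) (by fun_prop)]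
        ring

theorem tendsto_integral_norm_sq_mul_poissonPartialSum_one {w F : ℝ → ℂ} (hw : Continuous w)
    (hws : HasCompactSupport w) (hFc : Continuous F) (hF : HasCompactSupport F) :
    Tendsto (fun L : ℕ => ∫ t : ℝ,
      ‖w t * (poissonPartialSum 1 F L t - periodization 1 F t)‖ ^ 2) atTop (𝓝 0) := by
  obtain ⟨H, hH, hcoeff⟩ := exists_continuousMap_eq_periodization hFc hF
  obtain ⟨C, hC⟩ := exists_integral_norm_sq_mul_le hw hws
  let error (L : ℕ) : C(UnitAddCircle, ℂ) :=
    ∑ l ∈ Finset.Icc (-(L : ℤ)) L, fourierCoeff H l • fourier l - H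
  have herror : ∀ (L : ℕ) (t : ℝ), poissonPartialSum 1 F L t - periodization 1 F t =
      error L t := by
    intro L t
    simp only [error, poissonPartialSum, ← hH, hcoeff, Real.fourierChar_apply,
      ContinuousMap.sub_apply, ContinuousMap.sum_apply, ContinuousMap.smul_apply,
      fourier_coe_apply, smul_eq_mul, mul_one, ofReal_one, div_one]
    congr! 4
    push_cast
    ring
  have hlim : Tendsto (fun L => ∫ b, ‖error L b‖ ^ 2 ∂AddCircle.haarAddCircle) atTop (𝓝 0) := by
    simpa only [error, ContinuousMap.sub_apply, ContinuousMap.sum_apply, ContinuousMap.smul_apply,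
      smul_eq_mul] using tendsto_integral_norm_sq_fourier_partialSum_sub H
  simp only [herror]
  refine squeeze_zero (fun L => integral_nonneg fun t => by positivity) (fun L => hC (error L)) ?_
  simpa using hlim.const_mul C

theorem continuous_periodization {F : ℝ → ℂ} (hFc : Continuous F) (hF : HasCompactSupport F)
    {T : ℝ} (hT : T ≠ 0) : Continuous (periodization T F) := by
  have hc : Continuous fun u => F (u / T⁻¹) := by fun_prop
  have hs : HasCompactSupport fun u => F (u / T⁻¹) :=
    hasCompactSupport_comp_div hF (inv_ne_zero hT)
  obtain ⟨H, hH, -⟩ := exists_continuousMap_eq_periodization hc hs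
  have hHc : Continuous fun t : ℝ => H (t : UnitAddCircle) :=
    H.continuous.comp (AddCircle.continuous_mk' 1)
  have heq : periodization T F = fun t => H ((T⁻¹ * t : ℝ) : UnitAddCircle) := by
    ext t
    rw [hH, periodization_comp_div (inv_ne_zero hT), inv_inv]
  rw [heq]
  exact hHc.comp (continuous_const_mul T⁻¹)

theorem tendsto_integral_norm_sq_mul_poissonPartialSum {w F : ℝ → ℂ} (hw : Continuous w)
    (hws : HasCompactSupport w) (hFc : Continuous F) (hF : HasCompactSupport F) {a : ℝ}
    (ha : 0 < a) :
    Tendsto (fun L : ℕ => ∫ t : ℝ,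
      ‖w t * (poissonPartialSum a F L t - a⁻¹ * periodization a⁻¹ F t)‖ ^ 2) atTop (𝓝 0) := by
  have hunit := tendsto_integral_norm_sq_mul_poissonPartialSum_one
    (w := fun u => w (u / a)) (F := fun u => F (u / a)) (by fun_prop)
    (hasCompactSupport_comp_div hws ha.ne') (by fun_prop) (hasCompactSupport_comp_div hF ha.ne')
  have hsubst : ∀ L : ℕ,
      ∫ t : ℝ, ‖w t * (poissonPartialSum a F L t - a⁻¹ * periodization a⁻¹ F t)‖ ^ 2 =
      a⁻¹ ^ 3 * ∫ u : ℝ, ‖w (u / a) * (poissonPartialSum 1 (fun u => F (u / a)) L u -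
        periodization 1 (fun u => F (u / a)) u)‖ ^ 2 := by
    intro L
    have hcomp := Measure.integral_comp_mul_left (fun u : ℝ => ‖w (u / a) *
      (poissonPartialSum 1 (fun u => F (u / a)) L u -
        periodization 1 (fun u => F (u / a)) u)‖ ^ 2) a
    simp only [poissonPartialSum_comp_div ha, periodization_comp_div ha.ne',
      mul_div_cancel_left₀ _ ha.ne', abs_of_pos (inv_pos.2 ha), smul_eq_mul] at hcomp
    rw [pow_succ, mul_assoc, ← hcomp, ← integral_const_mul]
    refine integral_congr_ae (Eventually.of_forall fun t => ?_)
    have hfactor : poissonPartialSum a F L t - a⁻¹ * periodization a⁻¹ F t =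
        a⁻¹ * (a * poissonPartialSum a F L t - periodization a⁻¹ F t) := by
      rw [ofReal_inv, mul_sub, inv_mul_cancel_left₀ (ofReal_ne_zero.2 ha.ne')]
    simp only [hfactor, norm_mul, mul_pow, norm_inv, Complex.norm_real, Real.norm_of_nonneg ha.le]
    ring
  simp only [hsubst]
  simpa only [mul_zero] using hunit.const_mul (a⁻¹ ^ 3)

theorem integrable_norm_sq_mul {X : Type*} [TopologicalSpace X] [MeasurableSpace X]
    [OpensMeasurableSpace X] {μ : Measure X} [IsFiniteMeasureOnCompacts μ] {w g : X → ℂ}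
    (hw : Continuous w) (hws : HasCompactSupport w) (hg : Continuous g) :
    Integrable (fun t => ‖w t * g t‖ ^ 2) μ :=
  (hw.mul hg).norm.pow 2 |>.integrable_of_hasCompactSupport <|
    hws.mul_right.norm.comp_left (zero_pow two_ne_zero)

theorem tendsto_integral_norm_sq_finsetSum {α ι κ E : Type*} [MeasurableSpace α] {μ : Measure α}
    [NormedAddCommGroup E] {u : ι → κ → α → E} {l : Filter κ} (S : Finset ι)
    (hint : ∀ i ∈ S, ∀ n, Integrable (fun t => ‖u i n t‖ ^ 2) μ)
    (hlim : ∀ i ∈ S, Tendsto (fun n => ∫ t, ‖u i n t‖ ^ 2 ∂μ) l (𝓝 0)) :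
    Tendsto (fun n => ∫ t, ‖∑ i ∈ S, u i n t‖ ^ 2 ∂μ) l (𝓝 0) := by
  have hbound : ∀ n, ∫ t, ‖∑ i ∈ S, u i n t‖ ^ 2 ∂μ ≤ S.card * ∑ i ∈ S, ∫ t, ‖u i n t‖ ^ 2 ∂μ := by
    intro n
    rw [← integral_finsetSum S fun i hi => hint i hi n, ← integral_const_mul]
    refine integral_mono_of_nonneg (Eventually.of_forall fun t => by positivity)
      ((integrable_finsetSum S fun i hi => hint i hi n).const_mul _)
      (Eventually.of_forall fun t => ?_)
    calc ‖∑ i ∈ S, u i n t‖ ^ 2 ≤ (∑ i ∈ S, ‖u i n t‖) ^ 2 := by gcongr; exact norm_sum_le _ _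
      _ ≤ S.card * ∑ i ∈ S, ‖u i n t‖ ^ 2 := sq_sum_le_card_mul_sum_sq
  refine squeeze_zero (fun n => integral_nonneg fun t => by positivity) hbound ?_
  simpa using (tendsto_finsetSum S hlim).const_mul (S.card : ℝ)

theorem l2inner_rho_mul_rho (f ψ φ : ℝ → ℂ) (x y t : ℝ) :
    l2inner f (rho x y 1 ψ) * rho x y 1 φ t =
      φ (t + x) * (𝓕 (mulConjShift f ψ x) y * 𝐞 (y * t)) := by
  have hinner : l2inner f (rho x y 1 ψ) =
      cexp (-(Real.pi * I * (x * y))) * 𝓕 (mulConjShift f ψ x) y := by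
    rw [Real.fourier_real_eq_integral_exp_smul, ← integral_const_mul]
    refine integral_congr_ae (Eventually.of_forall fun s => ?_)
    have hphase : conj (Real.pi * I * (x * y + 2 * y * s) : ℂ) =
      -(Real.pi * I * (x * y)) + ↑(-2 * Real.pi * s * y) * I := by
      simp only [map_mul, map_add, Complex.conj_ofReal, Complex.conj_I, Complex.conj_ofNat]
      push_cast
      ring
    simp only [rho, mulConjShift, one_mul, map_mul conj (cexp _), ← Complex.exp_conj, hphase,
      Complex.exp_add, smul_eq_mul]
    ring
  have hrho : rho x y 1 φ t = cexp (Real.pi * I * (x * y)) * 𝐞 (y * t) * φ (t + x) := by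
    rw [rho, Real.fourierChar_apply, ← Complex.exp_add]
    push_cast
    ring_nf
  rw [hinner, hrho, Complex.exp_neg]
  field_simp

theorem zak_rho_translation (f : ℝ → ℂ) (x θ σ : ℝ) :
    zak (rho (-x) 0 1 f) θ σ = zak f θ (σ - x) := by
  refine tsum_congr fun l => ?_
  have hshift : σ - l + -x = σ - x - l := by ring
  simp [rho, hshift]

theorem exists_zak_eq_sum {φ : ℝ → ℂ} (hφ : HasCompactSupport φ) (σ : ℝ) : ∃ S : Finset ℤ,
    (∀ l ∉ S, φ (σ - l) = 0) ∧
      ∀ θ, zak φ θ σ = ∑ l ∈ S, φ (σ - l) * cexp (2 * Real.pi * I * l * θ) := by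
  have hfin := finite_support_comp_sub_int_mul hφ one_ne_zero σ
  simp only [mul_one] at hfin
  have hzero : ∀ l : ℤ, l ∉ hfin.toFinset → φ (σ - l) = 0 := by simp
  exact ⟨hfin.toFinset, hzero, fun θ => tsum_eq_sum fun l hl => by rw [hzero l hl, zero_mul]⟩

theorem continuous_zak {φ : ℝ → ℂ} (hφ : HasCompactSupport φ) (σ : ℝ) :
    Continuous fun θ => zak φ θ σ := by
  obtain ⟨S, -, hS⟩ := exists_zak_eq_sum hφ σ
  simp only [hS]
  fun_prop

theorem integral_exp_two_pi_mul_int (k : ℤ) :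
    ∫ θ in (0 : ℝ)..1, cexp (2 * Real.pi * I * k * θ) = if k = 0 then 1 else 0 := by
  have := fourierCoeff_eq_intervalIntegral (fourier k : C(UnitAddCircle, ℂ)) 0 0
  rw [fourierCoeff_fourier] at this
  simpa [-fourier_apply, fourier_coe_apply, Pi.single_apply, eq_comm] using this.symm

theorem integral_zak_mul_exp {φ : ℝ → ℂ} (hφ : HasCompactSupport φ) (σ : ℝ) (k : ℤ) :
    ∫ θ in (0 : ℝ)..1, zak φ θ σ * cexp (2 * Real.pi * I * k * θ) = φ (σ + k) := by
  obtain ⟨S, hzero, hS⟩ := exists_zak_eq_sum hφ σ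
  have hmul : ∀ θ : ℝ, zak φ θ σ * cexp (2 * Real.pi * I * k * θ) =
      ∑ l ∈ S, φ (σ - l) * cexp (2 * Real.pi * I * (l + k : ℤ) * θ) := by
    intro θ
    rw [hS, Finset.sum_mul]
    refine Finset.sum_congr rfl fun l _ => ?_
    rw [mul_assoc, ← Complex.exp_add]
    push_cast
    ring_nf
  simp only [hmul]
  rw [intervalIntegral.integral_finsetSum
    fun l _ => Continuous.intervalIntegrable (by fun_prop) _ _]
  simp only [intervalIntegral.integral_const_mul, integral_exp_two_pi_mul_int]
  rw [Finset.sum_eq_single (-k)]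
  · simp
  · intro l _ hl
    rw [if_neg (by omega), mul_zero]
  · intro hk
    rw [hzero _ hk, zero_mul]

theorem zak_mul_conj_zak {f ψ : ℝ → ℂ} (hf : HasCompactSupport f) {S : Finset ℤ}
    (hS : ∀ k : ℤ, k ∉ S → mulConjShift f ψ k = 0) (θ σ : ℝ) :
    zak f θ σ * conj (zak ψ θ σ) =
      ∑ k ∈ S, periodization 1 (mulConjShift f ψ k) σ * cexp (2 * Real.pi * I * k * θ) := by
  have hterm : ∀ n k : ℤ, f (σ - n) * cexp (2 * Real.pi * I * n * θ) *
      conj (ψ (σ - (n - k : ℤ)) * cexp (2 * Real.pi * I * (n - k : ℤ) * θ)) =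
      mulConjShift f ψ k (σ - n * 1) * cexp (2 * Real.pi * I * k * θ) := by
    intro n k
    have hphase : (2 * Real.pi * I * k * θ : ℂ) =
        2 * Real.pi * I * n * θ + conj (2 * Real.pi * I * (n - k : ℤ) * θ : ℂ) := by
      simp only [map_mul, Complex.conj_ofReal, Complex.conj_I, Complex.conj_ofNat, map_intCast]
      push_cast
      ring
    have hshift : σ - n * 1 + k = σ - (n - k : ℤ) := by
      push_cast
      ring
    rw [mulConjShift, hshift, hphase, Complex.exp_add, Complex.exp_conj, map_mul, mul_one]
    ring
  have hrow : ∀ n : ℤ, f (σ - n) * cexp (2 * Real.pi * I * n * θ) * conj (zak ψ θ σ) =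
      ∑ k ∈ S, mulConjShift f ψ k (σ - n * 1) * cexp (2 * Real.pi * I * k * θ) := by
    intro n
    rw [zak, conj_tsum, ← tsum_mul_left, ← (Equiv.subLeft n).tsum_eq]
    simp only [Equiv.subLeft_apply, hterm]
    exact tsum_eq_sum fun k hk => by simp only [hS k hk, Pi.zero_apply, zero_mul]
  have hsum : ∀ k ∈ S, Summable fun n : ℤ =>
      mulConjShift f ψ k (σ - n * 1) * cexp (2 * Real.pi * I * k * θ) := fun k _ =>
    (summable_comp_sub_int_mul (hasCompactSupport_mulConjShift hf ψ k) one_ne_zero σ).mul_right _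
  rw [zak, ← tsum_mul_right]
  simp only [hrow, Summable.tsum_finsetSum hsum, tsum_mul_right, periodization]

theorem Mmul_zak_mul_conj_zak {φ f ψ : ℝ → ℂ} (hφ : HasCompactSupport φ) (hf : HasCompactSupport f)
    {S : Finset ℤ} (hS : ∀ k : ℤ, k ∉ S → mulConjShift f ψ k = 0) (x t : ℝ) :
    Mmul (fun θ σ => zak φ θ σ * conj (zak ψ θ (σ - x))) (rho (-x) 0 1 f) t =
      ∑ k ∈ S, φ (t + k) * periodization 1 (mulConjShift f ψ k) (t - x) := by
  have hintegrand : ∀ θ : ℝ,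
      zak φ θ t * conj (zak ψ θ (t - x)) * zak (rho (-x) 0 1 f) θ t =
      ∑ k ∈ S, periodization 1 (mulConjShift f ψ k) (t - x) *
        (zak φ θ t * cexp (2 * Real.pi * I * k * θ)) := by
    intro θ
    rw [zak_rho_translation, mul_assoc, mul_comm (conj _), zak_mul_conj_zak hf hS, Finset.mul_sum]
    exact Finset.sum_congr rfl fun k _ => mul_left_comm _ _ _
  have hcont := continuous_zak hφ t
  simp only [Mmul, hintegrand]
  rw [intervalIntegral.integral_finsetSum
    fun k _ => Continuous.intervalIntegrable (by fun_prop) _ _]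
  simp only [intervalIntegral.integral_const_mul, integral_zak_mul_exp hφ]
  exact Finset.sum_congr rfl fun k _ => mul_comm _ _

theorem sum_Mmul_eq_sum_periodization {φ f ψ : ℝ → ℂ} (hφ : HasCompactSupport φ)
    (hf : HasCompactSupport f) {S : Finset ℤ} (hS : ∀ k : ℤ, k ∉ S → mulConjShift f ψ k = 0)
    {a : ℕ} (ha : a ≠ 0) (t : ℝ) :
    ∑ j ∈ Finset.range a, Mmul (fun θ σ => zak φ θ σ * conj (zak ψ θ (σ - (j : ℝ) / a)))
        (rho (-(j : ℝ) / a) 0 1 f) t =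
      ∑ k ∈ S, φ (t + k) * periodization (a : ℝ)⁻¹ (mulConjShift f ψ k) t := by
  have ha' : (a : ℝ) ≠ 0 := Nat.cast_ne_zero.2 ha
  simp only [neg_div, Mmul_zak_mul_conj_zak hφ hf hS]
  rw [Finset.sum_comm]
  refine Finset.sum_congr rfl fun k _ => ?_
  rw [← Finset.mul_sum, ← sum_periodization_sub (hasCompactSupport_mulConjShift hf ψ k) ha
    (inv_ne_zero ha') t, mul_inv_cancel₀ ha']
  simp only [div_eq_mul_inv]

theorem sum_l2inner_rho_mul_rho {f ψ : ℝ → ℂ} (φ : ℝ → ℂ) {S : Finset ℤ}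
    (hS : ∀ k : ℤ, k ∉ S → mulConjShift f ψ k = 0) (a : ℝ) {L : ℕ}
    (hL : S ⊆ Finset.Icc (-(L : ℤ)) L) (t : ℝ) :
    ∑ k ∈ Finset.Icc (-(L : ℤ)) L, ∑ l ∈ Finset.Icc (-(L : ℤ)) L,
        l2inner f (rho k (l * a) 1 ψ) * rho k (l * a) 1 φ t =
      ∑ k ∈ S, φ (t + k) * poissonPartialSum a (mulConjShift f ψ k) L t := by
  simp only [l2inner_rho_mul_rho, ← Finset.mul_sum]
  refine (Finset.sum_subset hL fun k _ hk => ?_).symm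
  simp [hS k hk, Real.fourier_real_eq]

end

theorem stmt_15_general (a : ℕ) (ha : 0 < a) (φ ψ f : ℝ → ℂ)
    (hφ : Continuous φ) (hφs : HasCompactSupport φ)
    (hψ : Continuous ψ) (hψs : HasCompactSupport ψ)
    (hf : Continuous f) (hfs : HasCompactSupport f) :
    Tendsto (fun L : ℕ => ∫ t : ℝ,
        ‖(∑ k ∈ Finset.Icc (-(L : ℤ)) L, ∑ l ∈ Finset.Icc (-(L : ℤ)) L,
            l2inner f (rho (k : ℝ) ((l : ℝ) * a) 1 ψ) *
              rho (k : ℝ) ((l : ℝ) * a) 1 φ t) -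
          ((a : ℂ))⁻¹ * ∑ j ∈ Finset.range a,
            Mmul (fun θ σ => zak φ θ σ * (starRingEnd ℂ) (zak ψ θ (σ - (j : ℝ) / a)))
              (rho (-(j : ℝ) / a) 0 1 f) t‖ ^ 2)
      atTop (𝓝 0) := by
  have ha' : (0 : ℝ) < a := Nat.cast_pos.2 ha
  have hfin := finite_support_mulConjShift hfs hψs
  set S := hfin.toFinset
  have hS : ∀ k : ℤ, k ∉ S → mulConjShift f ψ k = 0 := fun k hk => by simpa [S] using hk
  have hw (k : ℤ) : Continuous fun t : ℝ => φ (t + k) := by fun_prop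
  have hws (k : ℤ) : HasCompactSupport fun t : ℝ => φ (t + k) :=
    hφs.comp_homeomorph (Homeomorph.addRight (k : ℝ))
  have hF (k : ℤ) := continuous_mulConjShift hf hψ k
  have hFs (k : ℤ) := hasCompactSupport_mulConjShift hfs ψ k
  have hlim := tendsto_integral_norm_sq_finsetSum S
    (fun k _ L => integrable_norm_sq_mul (hw k) (hws k)
      ((continuous_poissonPartialSum a (mulConjShift f ψ k) L).sub
        (continuous_const.mul (continuous_periodization (hF k) (hFs k) (inv_ne_zero ha'.ne')))))
    (fun k _ => tendsto_integral_norm_sq_mul_poissonPartialSum (hw k) (hws k) (hF k) (hFs k) ha')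
  refine hlim.congr' ?_
  filter_upwards [Finset.tendsto_Icc_neg.eventually (eventually_ge_atTop S)] with L hL
  refine integral_congr_ae (Eventually.of_forall fun t => ?_)
  simp only [sum_l2inner_rho_mul_rho φ hS a hL, sum_Mmul_eq_sum_periodization hφs hfs hS ha.ne']
  simp [mul_sub, Finset.mul_sum, mul_left_comm]

/-- For the rank-one operator `X = φ ⊗ ψ̄` with `φ, ψ` smooth and compactly supported and
`N = ℤ × aℤ`, the square partial sums of `Σ_{n∈N} ρ(n,1) X ρ(n,1)⁻¹ f` converge in `L²(ℝ)`
to `a⁻¹ X̃ f`, where `X̃ = Σ_{j=0}^{a-1} M_{g_j} ρ(-j/a,0,1)`,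
`g_j(θ,σ) = (Zφ)(θ,σ) conj((Zψ)(θ,σ-j/a))`. -/
theorem stmt_15 (a : ℕ) (ha : 0 < a) (φ ψ f : ℝ → ℂ)
    (hφ : ContDiff ℝ (⊤ : ℕ∞) φ) (hφs : HasCompactSupport φ)
    (hψ : ContDiff ℝ (⊤ : ℕ∞) ψ) (hψs : HasCompactSupport ψ)
    (hf : ContDiff ℝ (⊤ : ℕ∞) f) (hfs : HasCompactSupport f) :
    Tendsto (fun L : ℕ => ∫ t : ℝ,
        ‖(∑ k ∈ Finset.Icc (-(L : ℤ)) L, ∑ l ∈ Finset.Icc (-(L : ℤ)) L,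
            l2inner f (rho (k : ℝ) ((l : ℝ) * a) 1 ψ) *
              rho (k : ℝ) ((l : ℝ) * a) 1 φ t) -
          ((a : ℂ))⁻¹ * ∑ j ∈ Finset.range a,
            Mmul (fun θ σ => zak φ θ σ * (starRingEnd ℂ) (zak ψ θ (σ - (j : ℝ) / a)))
              (rho (-(j : ℝ) / a) 0 1 f) t‖ ^ 2)
      atTop (𝓝 0) :=
  stmt_15_general a ha φ ψ f hφ.continuous hφs hψ.continuous hψs hf.continuous hfs
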